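/- arXiv:1306.2837 — 3 statements merged into one kernel-verified Lean document; each statement's English description precedes it below -/
import Mathlib

section
/- Let R be an associative unital ring with unit e and let α, β, γ ∈ R. If the 2×2 matrix Υ := [[0, −β],[α, γ]] is invertible in the matrix ring M₂(R), then α is left invertible and β is right invertible in R. If, in addition, one of the two elements α, β is (two-sided) invertible in R, then so is the other. -/
/-!
Let `V` be the inverse of `Υ`. The row `(0, -β)` and the column `(0, α)` of `Υ` each have at most
one nonzero entry, so `Υ * V = 1` and `V * Υ = 1` exhibit one-sided inverses of `β` and `α` among
the entries of `V`, up to sign. Each of `α` and `β` is a unit exactly when `V 1 1 = 0`: a unit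
cancels from `V 1 1 * α = 0` or `β * V 1 1 = 0`, and conversely `V 1 1 = 0` leaves at most one
nonzero entry in the last column and in the last row of `V`, so that the same argument applies with
`V` and `Υ` exchanged.
-/

section SingleEntry

variable {l m n S : Type*} [Fintype m]

theorem matrix_mul_apply_of_row_eq_zero_of_ne [NonUnitalNonAssocSemiring S]
    {M : Matrix l m S} {i : l} {j : m} (hM : ∀ k ≠ j, M i k = 0) (N : Matrix m n S) (k : n) :
    (M * N) i k = M i j * N j k := by
  rw [Matrix.mul_apply]
  exact Fintype.sum_eq_single j fun x hx ↦ by rw [hM x hx, zero_mul]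

theorem matrix_mul_apply_of_col_eq_zero_of_ne [NonUnitalNonAssocSemiring S]
    (M : Matrix l m S) {N : Matrix m n S} {i : m} {j : n} (hN : ∀ k ≠ i, N k j = 0) (k : l) :
    (M * N) k j = M k i * N i j := by
  rw [Matrix.mul_apply]
  exact Fintype.sum_eq_single i fun x hx ↦ by rw [hN x hx, mul_zero]

variable [NonAssocSemiring S] [DecidableEq l]

theorem matrix_apply_mul_apply_eq_one_of_row_eq_zero_of_ne {M : Matrix l m S} {N : Matrix m l S}
    (hMN : M * N = 1) {i : l} {j : m} (hM : ∀ k ≠ j, M i k = 0) :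
    M i j * N j i = 1 := by
  rw [← matrix_mul_apply_of_row_eq_zero_of_ne hM, hMN, Matrix.one_apply_eq]

theorem matrix_apply_mul_apply_eq_one_of_col_eq_zero_of_ne {M : Matrix l m S} {N : Matrix m l S}
    (hMN : M * N = 1) {i : m} {j : l} (hN : ∀ k ≠ i, N k j = 0) :
    M j i * N i j = 1 := by
  rw [← matrix_mul_apply_of_col_eq_zero_of_ne M hN, hMN, Matrix.one_apply_eq]

end SingleEntry

section InversePair

variable {m n S : Type*} [Fintype m] [Fintype n] [DecidableEq m] [DecidableEq n] [Semiring S]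
  {M : Matrix m n S} {N : Matrix n m S} {i : m} {j : n}

theorem isUnit_matrix_apply_iff_of_row_eq_zero_of_ne (hMN : M * N = 1) (hNM : N * M = 1)
    (hM : ∀ k ≠ j, M i k = 0) :
    IsUnit (M i j) ↔ ∀ k ≠ i, N j k = 0 := by
  constructor
  · intro hunit k hk
    have hzero : M i j * N j k = 0 := by
      rw [← matrix_mul_apply_of_row_eq_zero_of_ne hM, hMN, Matrix.one_apply_ne hk.symm]
    exact hunit.mul_right_eq_zero.mp hzero
  · intro hN
    exact isUnit_iff_exists.mpr ⟨N j i,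
      matrix_apply_mul_apply_eq_one_of_row_eq_zero_of_ne hMN hM,
      matrix_apply_mul_apply_eq_one_of_row_eq_zero_of_ne hNM hN⟩

theorem isUnit_matrix_apply_iff_of_col_eq_zero_of_ne (hMN : M * N = 1) (hNM : N * M = 1)
    (hM : ∀ k ≠ i, M k j = 0) :
    IsUnit (M i j) ↔ ∀ k ≠ j, N k i = 0 := by
  constructor
  · intro hunit k hk
    have hzero : N k i * M i j = 0 := by
      rw [← matrix_mul_apply_of_col_eq_zero_of_ne N hM, hNM, Matrix.one_apply_ne hk]
    exact hunit.mul_left_eq_zero.mp hzero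
  · intro hN
    exact isUnit_iff_exists.mpr ⟨N j i,
      matrix_apply_mul_apply_eq_one_of_col_eq_zero_of_ne hMN hN,
      matrix_apply_mul_apply_eq_one_of_col_eq_zero_of_ne hNM hM⟩

end InversePair

theorem stmt3_general {S : Type*} [Semiring S] {a b c : S}
    (h : IsUnit (!![0, b; a, c] : Matrix (Fin 2) (Fin 2) S)) :
    (∃ l : S, l * a = 1) ∧ (∃ r : S, b * r = 1) ∧ (IsUnit a ↔ IsUnit b) := by
  obtain ⟨V, hUV, hVU⟩ := isUnit_iff_exists.mp h
  have hrow : ∀ k ≠ 1, !![0, b; a, c] 0 k = 0 := by simp [Fin.forall_fin_two]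
  have hcol : ∀ k ≠ 1, !![0, b; a, c] k 0 = 0 := by simp [Fin.forall_fin_two]
  have ha : IsUnit a ↔ V 1 1 = 0 := by
    simpa [Fin.forall_fin_two] using isUnit_matrix_apply_iff_of_col_eq_zero_of_ne hUV hVU hcol
  have hb : IsUnit b ↔ V 1 1 = 0 := by
    simpa [Fin.forall_fin_two] using isUnit_matrix_apply_iff_of_row_eq_zero_of_ne hUV hVU hrow
  exact ⟨⟨V 0 1, matrix_apply_mul_apply_eq_one_of_col_eq_zero_of_ne hVU hcol⟩,
    ⟨V 1 0, matrix_apply_mul_apply_eq_one_of_row_eq_zero_of_ne hUV hrow⟩, ha.trans hb.symm⟩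

/-- In a unital ring `R`, if the matrix `Υ = [[0, −β],[α, γ]]` is invertible
in `M₂(R)`, then `α` is left invertible and `β` is right invertible; if moreover one of
`α`, `β` is invertible, then so is the other. -/
theorem stmt3 (R : Type*) [Ring R] (α β γ : R)
    (h : IsUnit (!![0, -β; α, γ] : Matrix (Fin 2) (Fin 2) R)) :
    (∃ l : R, l * α = 1) ∧ (∃ r : R, β * r = 1) ∧
    (IsUnit α ∨ IsUnit β → IsUnit α ∧ IsUnit β) := by
  obtain ⟨hα, ⟨r, hr⟩, hiff⟩ := stmt3_general h
  exact ⟨hα, ⟨-r, by rwa [mul_neg, ← neg_mul]⟩, by rw [hiff, IsUnit.neg_iff]; tauto⟩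
end

section
/- For 1 < p < ∞ define h_p : ℝ → ℂ by h_p(y) := 1 / sinh(π(y + i/p)), and set Ω₁ := {z ∈ ℂ : Im z ≤ 0 and Re z ≥ 0}, Ω₂ := {z ∈ ℂ : Im z ≤ 0 and Re z ≤ 0}. If 1 < p ≤ 2, then h_p(y) ∈ Ω₁ for all y ≤ 0 and h_p(y) ∈ Ω₂ for all y ≥ 0. If 2 ≤ p < ∞, then h_p(y) ∈ Ω₂ for all y ≤ 0 and h_p(y) ∈ Ω₁ for all y ≥ 0. -/
/-!
For `z = x + i t` one has `sinh z = sinh x cos t + i cosh x sin t`, and inversion `w ↦ w⁻¹` keeps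
the sign of the real part and reverses that of the imaginary part. So `Re (1 / sinh z)` has the sign
of `x cos t` and `Im (1 / sinh z)` that of `-sin t`. For `x = π y` and `t = π / p ∈ (0, π)` the sine
is nonnegative, and the cosine changes sign at `p = 2`.
-/

open Real hiding sign
open SignType (sign)

theorem sinh_eq_mk (z : ℂ) :
    Complex.sinh z = ⟨sinh z.re * cos z.im, cosh z.re * sin z.im⟩ := by
  rw [Complex.mk_eq_add_mul_I]
  push_cast
  rw [mul_assoc, ← Complex.cosh_mul_I, ← Complex.sinh_mul_I, ← Complex.sinh_add, Complex.re_add_im]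

theorem sign_sinh (x : ℝ) : sign (sinh x) = sign x := by
  rcases lt_trichotomy x 0 with hx | rfl | hx
  · rw [sign_neg hx, sign_neg (sinh_neg_iff.2 hx)]
  · rw [sinh_zero]
  · rw [sign_pos hx, sign_pos (sinh_pos_iff.2 hx)]

theorem sign_re_inv (w : ℂ) : sign w⁻¹.re = sign w.re := by
  rcases eq_or_ne w 0 with rfl | hw
  · rw [inv_zero]
  · rw [Complex.inv_re, div_eq_mul_inv, sign_mul,
      sign_pos (inv_pos.2 (Complex.normSq_pos.2 hw)), mul_one]

theorem sign_im_inv (w : ℂ) : sign w⁻¹.im = sign (-w.im) := by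
  rcases eq_or_ne w 0 with rfl | hw
  · simp
  · rw [Complex.inv_im, div_eq_mul_inv, sign_mul,
      sign_pos (inv_pos.2 (Complex.normSq_pos.2 hw)), mul_one]

theorem sign_re_inv_sinh (z : ℂ) : sign (Complex.sinh z)⁻¹.re = sign (z.re * cos z.im) := by
  rw [sign_re_inv, sinh_eq_mk, sign_mul, sign_sinh, sign_mul]

theorem sign_im_inv_sinh (z : ℂ) : sign (Complex.sinh z)⁻¹.im = sign (-sin z.im) := by
  rw [sign_im_inv, sinh_eq_mk, ← mul_neg, sign_mul, sign_pos (cosh_pos _), one_mul]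

theorem sin_pi_div_nonneg {p : ℝ} (hp : 1 ≤ p) : 0 ≤ sin (π / p) :=
  sin_nonneg_of_nonneg_of_le_pi (by positivity) (div_le_self pi_nonneg hp)

theorem cos_pi_div_nonpos {p : ℝ} (hp : 1 ≤ p) (hp2 : p ≤ 2) : cos (π / p) ≤ 0 :=
  cos_nonpos_of_pi_div_two_le_of_le (by gcongr)
    ((div_le_self pi_nonneg hp).trans (by linarith [pi_pos]))

theorem cos_pi_div_nonneg {p : ℝ} (hp : 2 ≤ p) : 0 ≤ cos (π / p) :=
  cos_nonneg_of_neg_pi_div_two_le_of_le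
    ((neg_nonpos.2 pi_div_two_pos.le).trans (by positivity)) (by gcongr)

/-- The function `h_p`, the reciprocal of `sinh` along the horizontal line `Im z = π / p`. It is
defined for every real `p`, with value `0` where `sinh` vanishes. -/
noncomputable def invSinhLine (p y : ℝ) : ℂ :=
  1 / Complex.sinh (π * (y + Complex.I / p))

/-- The closed fourth quadrant, the set `Ω₁` of the paper. -/
def fourthQuadrant : Set ℂ := {z | z.im ≤ 0 ∧ 0 ≤ z.re}

/-- The closed third quadrant, the set `Ω₂` of the paper. -/
def thirdQuadrant : Set ℂ := {z | z.im ≤ 0 ∧ z.re ≤ 0}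

section

variable (p y : ℝ)

theorem invSinhLine_eq_inv_sinh : invSinhLine p y = (Complex.sinh ⟨π * y, π / p⟩)⁻¹ := by
  rw [invSinhLine, one_div, Complex.mk_eq_add_mul_I]
  push_cast
  ring_nf

theorem sign_re_invSinhLine : sign (invSinhLine p y).re = sign (y * cos (π / p)) := by
  rw [invSinhLine_eq_inv_sinh, sign_re_inv_sinh, mul_assoc, sign_mul, sign_pos pi_pos, one_mul]

theorem sign_im_invSinhLine : sign (invSinhLine p y).im = sign (-sin (π / p)) := by
  rw [invSinhLine_eq_inv_sinh, sign_im_inv_sinh]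

end

section

variable {p y : ℝ}

theorem im_invSinhLine_nonpos (hp : 1 ≤ p) : (invSinhLine p y).im ≤ 0 := by
  rw [← sign_nonpos_iff, sign_im_invSinhLine, sign_nonpos_iff, neg_nonpos]
  exact sin_pi_div_nonneg hp

theorem invSinhLine_mem_fourthQuadrant (hp : 1 ≤ p) (hy : 0 ≤ y * cos (π / p)) :
    invSinhLine p y ∈ fourthQuadrant :=
  ⟨im_invSinhLine_nonpos hp, by rwa [← sign_nonneg_iff, sign_re_invSinhLine, sign_nonneg_iff]⟩

theorem invSinhLine_mem_thirdQuadrant (hp : 1 ≤ p) (hy : y * cos (π / p) ≤ 0) :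
    invSinhLine p y ∈ thirdQuadrant :=
  ⟨im_invSinhLine_nonpos hp, by rwa [← sign_nonpos_iff, sign_re_invSinhLine, sign_nonpos_iff]⟩

end

/-- For `1 < p < ∞` and `h_p(y) = 1 / sinh(π(y + i/p))`, with
`Ω₁ = {Im z ≤ 0, Re z ≥ 0}` and `Ω₂ = {Im z ≤ 0, Re z ≤ 0}`: if `1 < p ≤ 2` then
`h_p(y) ∈ Ω₁` for `y ≤ 0` and `h_p(y) ∈ Ω₂` for `y ≥ 0`; if `2 ≤ p < ∞` then
`h_p(y) ∈ Ω₂` for `y ≤ 0` and `h_p(y) ∈ Ω₁` for `y ≥ 0`. -/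
theorem stmt17 (p : ℝ) (hp : 1 < p) (h : ℝ → ℂ)
    (hdef : ∀ y : ℝ, h y = 1 / Complex.sinh (Real.pi * (y + Complex.I / p))) :
    (p ≤ 2 → ∀ y : ℝ,
      (y ≤ 0 → (h y).im ≤ 0 ∧ 0 ≤ (h y).re) ∧
      (0 ≤ y → (h y).im ≤ 0 ∧ (h y).re ≤ 0)) ∧
    (2 ≤ p → ∀ y : ℝ,
      (y ≤ 0 → (h y).im ≤ 0 ∧ (h y).re ≤ 0) ∧
      (0 ≤ y → (h y).im ≤ 0 ∧ 0 ≤ (h y).re)) := by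
  obtain rfl : h = invSinhLine p := funext hdef
  refine ⟨fun hp2 y ↦ ?_, fun hp2 y ↦ ?_⟩
  · have hcos := cos_pi_div_nonpos hp.le hp2
    exact ⟨fun hy ↦ invSinhLine_mem_fourthQuadrant hp.le (mul_nonneg_of_nonpos_of_nonpos hy hcos),
      fun hy ↦ invSinhLine_mem_thirdQuadrant hp.le (mul_nonpos_of_nonneg_of_nonpos hy hcos)⟩
  · have hcos := cos_pi_div_nonneg hp2
    exact ⟨fun hy ↦ invSinhLine_mem_thirdQuadrant hp.le (mul_nonpos_of_nonpos_of_nonneg hy hcos),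
      fun hy ↦ invSinhLine_mem_fourthQuadrant hp.le (mul_nonneg hy hcos)⟩
end

section
/- For 1 < p < ∞ define h_p : ℝ → ℂ by h_p(y) := 1 / sinh(π(y + i/p)). Then for every y ∈ ℝ the inequality |Im h_p(y)| ≤ 1 / sin(π/p) holds, and equality holds if and only if y = 0. -/
/-!
Since `|sinh z|² = sinh² (re z) + sin² (im z)`, the modulus of `sinh z` is at least `|sin (im z)|`,
with equality exactly on the imaginary axis. Hence
`|Im (1 / sinh z)| ≤ 1 / |sinh z| ≤ 1 / |sin (im z)|`, and the second inequality is strict off the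
imaginary axis. On that axis `sinh z = i sin (im z)`, so `1 / sinh z` is purely imaginary and both
inequalities are equalities.
-/

theorem normSq_sinh (z : ℂ) :
    Complex.normSq (Complex.sinh z) = Real.sinh z.re ^ 2 + Real.sin z.im ^ 2 := by
  have hsinh : Complex.sinh z = ((Real.sinh z.re * Real.cos z.im : ℝ) : ℂ) +
      ((Real.cosh z.re * Real.sin z.im : ℝ) : ℂ) * Complex.I := by
    conv_lhs => rw [← Complex.re_add_im z]
    rw [Complex.sinh_add, Complex.cosh_mul_I, Complex.sinh_mul_I]
    push_cast
    ring
  rw [hsinh, Complex.normSq_add_mul_I, mul_pow, mul_pow, Real.cos_sq', Real.cosh_sq]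
  ring

theorem abs_sin_im_le_norm_sinh (z : ℂ) : |Real.sin z.im| ≤ ‖Complex.sinh z‖ := by
  refine abs_le_of_sq_le_sq ?_ (norm_nonneg _)
  rw [← Complex.normSq_eq_norm_sq, normSq_sinh]
  exact le_add_of_nonneg_left (sq_nonneg _)

theorem norm_sinh_eq_abs_sin_im_iff (z : ℂ) :
    ‖Complex.sinh z‖ = |Real.sin z.im| ↔ z.re = 0 := by
  rw [← sq_eq_sq₀ (norm_nonneg _) (abs_nonneg _), sq_abs, ← Complex.normSq_eq_norm_sq,
    normSq_sinh, add_eq_right, sq_eq_zero_iff, Real.sinh_eq_zero]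

theorem abs_im_inv_le_inv_norm (w : ℂ) : |w⁻¹.im| ≤ ‖w‖⁻¹ :=
  (Complex.abs_im_le_norm _).trans_eq (norm_inv _)

theorem inv_norm_sinh_le_inv_abs_sin_im {z : ℂ} (hz : Real.sin z.im ≠ 0) :
    ‖Complex.sinh z‖⁻¹ ≤ |Real.sin z.im|⁻¹ :=
  inv_anti₀ (abs_pos.2 hz) (abs_sin_im_le_norm_sinh z)

theorem abs_im_inv_sinh_le_inv_abs_sin_im {z : ℂ} (hz : Real.sin z.im ≠ 0) :
    |(Complex.sinh z)⁻¹.im| ≤ |Real.sin z.im|⁻¹ :=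
  (abs_im_inv_le_inv_norm _).trans (inv_norm_sinh_le_inv_abs_sin_im hz)

theorem im_inv_sinh_of_re_eq_zero {z : ℂ} (hz : z.re = 0) :
    (Complex.sinh z)⁻¹.im = -(Real.sin z.im)⁻¹ := by
  have hsinh : Complex.sinh z = (Real.sin z.im : ℂ) * Complex.I := by
    conv_lhs => rw [← Complex.re_add_im z, hz, Complex.ofReal_zero, zero_add]
    rw [Complex.sinh_mul_I, Complex.ofReal_sin]
  rw [hsinh, mul_inv, Complex.inv_I, ← Complex.ofReal_inv, Complex.im_ofReal_mul, Complex.neg_im,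
    Complex.I_im, mul_neg_one]

theorem abs_im_inv_sinh_eq_inv_abs_sin_im_iff {z : ℂ} (hz : Real.sin z.im ≠ 0) :
    |(Complex.sinh z)⁻¹.im| = |Real.sin z.im|⁻¹ ↔ z.re = 0 := by
  refine ⟨fun heq => ?_, fun hre => ?_⟩
  · have hinv : ‖Complex.sinh z‖⁻¹ = |Real.sin z.im|⁻¹ :=
      (inv_norm_sinh_le_inv_abs_sin_im hz).antisymm (heq.ge.trans (abs_im_inv_le_inv_norm _))
    exact (norm_sinh_eq_abs_sin_im_iff z).1 (inv_injective hinv)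
  · rw [im_inv_sinh_of_re_eq_zero hre, abs_neg, abs_inv]

theorem sin_pi_div_pos {p : ℝ} (hp : 1 < p) : 0 < Real.sin (Real.pi / p) :=
  Real.sin_pos_of_pos_of_lt_pi (div_pos Real.pi_pos (one_pos.trans hp))
    (div_lt_self Real.pi_pos hp)

theorem stmt18_general (p : ℝ) (hp : Real.sin (Real.pi / p) ≠ 0) (h : ℝ → ℂ)
    (hdef : ∀ y : ℝ, h y = 1 / Complex.sinh (Real.pi * (y + Complex.I / p))) :
    ∀ y : ℝ, |(h y).im| ≤ 1 / |Real.sin (Real.pi / p)| ∧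
      (|(h y).im| = 1 / |Real.sin (Real.pi / p)| ↔ y = 0) := by
  intro y
  set z : ℂ := Real.pi * (y + Complex.I / p) with hz
  have hre : z.re = Real.pi * y := by simp [hz]
  have him : z.im = Real.pi / p := by
    simp [hz, Complex.div_ofReal_im, ← div_eq_mul_inv]
  rw [← him] at hp ⊢
  rw [hdef, one_div, one_div]
  refine ⟨abs_im_inv_sinh_le_inv_abs_sin_im hp, (abs_im_inv_sinh_eq_inv_abs_sin_im_iff hp).trans ?_⟩
  rw [hre, mul_eq_zero, or_iff_right Real.pi_ne_zero]

/-- For `1 < p < ∞` and `h_p(y) = 1 / sinh(π(y + i/p))`, the inequality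
`|Im h_p(y)| ≤ 1 / sin(π/p)` holds for all real `y`, with equality if and only if `y = 0`. -/
theorem stmt18 (p : ℝ) (hp : 1 < p) (h : ℝ → ℂ)
    (hdef : ∀ y : ℝ, h y = 1 / Complex.sinh (Real.pi * (y + Complex.I / p))) :
    ∀ y : ℝ, |(h y).im| ≤ 1 / Real.sin (Real.pi / p) ∧
      (|(h y).im| = 1 / Real.sin (Real.pi / p) ↔ y = 0) := by
  rw [← abs_of_pos (sin_pi_div_pos hp)]
  exact stmt18_general p (sin_pi_div_pos hp).ne' h hdef
end
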